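/- arXiv:2206.02621 — 2 statements merged into one kernel-verified Lean document; each statement's English description precedes it below -/
import Mathlib

section
/- Let T : Fin 2 → Fin 2 → Fin 2 → ℝ be totally symmetric, i.e. T i j k = T j i k = T i k j for all i, j, k. Then Σ_{i,j,k} (T i j k)² ≥ (3/4) * Σ_i (Σ_j T i j j)². (This is the pointwise gradient estimate |∇A|² ≥ (3/4)|∇H²|² of Proposition 3.4, applied to the totally symmetric covariant derivative ∇A of the scalar second fundamental form A = θ̄χ, whose trace is H².) -/
noncomputable section

/-- A totally symmetric 3-tensor `T` in dimension 2 satisfies the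
pointwise estimate `|T|² ≥ (3/4)|tr T|²`; applied to `T = ∇A` this is the gradient
estimate `|∇A|² ≥ (3/4)|∇H²|²` of Proposition 3.4. -/
theorem totally_symmetric_three_tensor_trace_estimate
    (T : Fin 2 → Fin 2 → Fin 2 → ℝ)
    (hsymm₁ : ∀ i j k, T i j k = T j i k)
    (hsymm₂ : ∀ i j k, T i j k = T i k j) :
    (3 / 4) * ∑ i, (∑ j, T i j j) ^ 2 ≤ ∑ i, ∑ j, ∑ k, (T i j k) ^ 2 := by
  simp only [Fin.sum_univ_two]
  -- By symmetry the components are `a = T 0 0 0`, `b = T 0 0 1`, `c = T 0 1 1`, `d = T 1 1 1`.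
  rw [hsymm₁ 1 0 0, hsymm₂ 0 1 0, hsymm₁ 1 0 1, hsymm₂ 1 1 0, hsymm₁ 1 0 1]
  -- The difference of the two sides is `((a - 3c)² + (d - 3b)²) / 4`, which is the squared
  -- norm of the trace-free part of `T`.
  nlinarith [sq_nonneg (T 0 0 0 - 3 * T 0 1 1), sq_nonneg (T 1 1 1 - 3 * T 0 0 1)]
end
end

section
/- Let U ⊆ ℝ² (i.e. EuclideanSpace ℝ (Fin 2)) be open and connected, and for i, j ∈ Fin 2 let A i j : U → ℝ be differentiable functions such that for every p ∈ U the matrix (A i j p) is symmetric. Assume the Codazzi condition: for all p ∈ U and all i, j, k ∈ Fin 2, fderiv ℝ (A j k) p (e i) = fderiv ℝ (A i k) p (e j), where e i denotes the standard basis; and assume A is pure trace: A i j p = (1/2) * (A 0 0 p + A 1 1 p) * (if i = j then 1 else 0) for all p, i, j. Then the trace function p ↦ A 0 0 p + A 1 1 p is constant on U. (This is the Schur-type argument of Proposition 3.2/3.4: a pure-trace Codazzi tensor in dimension 2 has constant trace; on the lightcone it shows that å = 0 forces the spacetime mean curvature H² to be constant.) -/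
/-!
For a pure-trace tensor, `A 0 1 = A 1 0 = 0` and `A 0 0 = A 1 1` on the open set `U`, so at each
point of `U` the derivatives of the off-diagonal entries vanish and those of the two diagonal
entries agree. The Codazzi equations then read `∂₀ A₁₁ = ∂₁ A₀₁ = 0` and `∂₁ A₀₀ = ∂₀ A₁₀ = 0`,
so the common derivative of the diagonal entries vanishes in both directions. The trace therefore
has zero derivative on a connected open set.
-/


noncomputable section

/-- A pure-trace Codazzi tensor on a connected open subset of the
Euclidean plane has constant trace (the Schur-type argument of Propositions 3.2/3.4:
`Å = 0` forces the spacetime mean curvature `H²` to be constant). -/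
theorem pure_trace_codazzi_tensor_constant_trace
    (U : Set (EuclideanSpace ℝ (Fin 2)))
    (hU : IsOpen U) (hconn : IsConnected U)
    (A : Fin 2 → Fin 2 → EuclideanSpace ℝ (Fin 2) → ℝ)
    (hdiff : ∀ i j, ∀ p ∈ U, DifferentiableAt ℝ (A i j) p)
    (hsymm : ∀ p ∈ U, ∀ i j, A i j p = A j i p)
    (hcodazzi : ∀ p ∈ U, ∀ i j k : Fin 2,
      fderiv ℝ (A j k) p (EuclideanSpace.single i 1) =
        fderiv ℝ (A i k) p (EuclideanSpace.single j 1))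
    (htrace : ∀ p ∈ U, ∀ i j,
      A i j p = (1 / 2) * (A 0 0 p + A 1 1 p) * (if i = j then 1 else 0)) :
    ∀ p ∈ U, ∀ q ∈ U, A 0 0 p + A 1 1 p = A 0 0 q + A 1 1 q := by
  have hD : ∀ p ∈ U, fderiv ℝ (A 0 0) p = 0 ∧ fderiv ℝ (A 1 1) p = 0 := by
    intro p hp
    -- The pure-trace identities hold near `p`, hence may be differentiated there.
    have hnear := hU.mem_nhds hp
    have h01 : fderiv ℝ (A 0 1) p = 0 := by
      have h : A 0 1 =ᶠ[nhds p] fun _ => 0 := by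
        filter_upwards [hnear] with x hx
        simpa using htrace x hx 0 1
      rw [h.fderiv_eq, fderiv_fun_const, Pi.zero_apply]
    have h10 : fderiv ℝ (A 1 0) p = 0 := by
      have h : A 1 0 =ᶠ[nhds p] fun _ => 0 := by
        filter_upwards [hnear] with x hx
        simpa using htrace x hx 1 0
      rw [h.fderiv_eq, fderiv_fun_const, Pi.zero_apply]
    have hdiag : fderiv ℝ (A 0 0) p = fderiv ℝ (A 1 1) p := by
      have h : A 0 0 =ᶠ[nhds p] A 1 1 := by
        filter_upwards [hnear] with x hx
        have h := htrace x hx 0 0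
        rw [if_pos rfl] at h
        linarith
      exact h.fderiv_eq
    have h₀ := hcodazzi p hp 0 1 1
    have h₁ := hcodazzi p hp 0 1 0
    rw [h01, zero_apply] at h₀
    rw [h10, zero_apply] at h₁
    have h11 : fderiv ℝ (A 1 1) p = 0 := by
      apply ContinuousLinearMap.coe_injective
      refine (EuclideanSpace.basisFun (Fin 2) ℝ).toBasis.ext fun i => ?_
      fin_cases i
      · simpa using h₀
      · simpa [hdiag] using h₁.symm
    exact ⟨hdiag.trans h11, h11⟩
  intro p hp q hq
  refine hU.is_const_of_fderiv_eq_zero (𝕜 := ℝ) (f := fun x => A 0 0 x + A 1 1 x)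
    hconn.isPreconnected
    (fun x hx => ((hdiff 0 0 x hx).add (hdiff 1 1 x hx)).differentiableWithinAt)
    (fun x hx => ?_) hp hq
  rw [fderiv_fun_add (hdiff 0 0 x hx) (hdiff 1 1 x hx), (hD x hx).1, (hD x hx).2, add_zero,
    Pi.zero_apply]
end
end
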